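/- There exists a universal constant C > 0 such that the following holds. Let n, t ∈ ℕ with t ≥ 1 and let Σ be an n×n positive definite real matrix with condition number κ := λ_max(Σ)/λ_min(Σ). Then 𝒩_{t, 1/3^{t+1}}(Σ) ≤ 2^{C·t²}·κ^{2t+1}·n. -/

import Mathlib

open Matrix MeasureTheory ProbabilityTheory
open scoped BigOperators ENNReal

noncomputable section

/-- `v` has at most `t` nonzero coordinates. -/
def SparseVec {k : ℕ} (t : ℕ) (v : Fin k → ℝ) : Prop := {i | v i ≠ 0}.ncard ≤ t

/-- ⟨x,y⟩_Σ := xᵀ Σ y. -/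
def innerSigma {k : ℕ} (A : Matrix (Fin k) (Fin k) ℝ) (x y : Fin k → ℝ) : ℝ := x ⬝ᵥ (A *ᵥ y)

/-- ‖x‖_Σ := √(xᵀ Σ x). -/
def normSigma {k : ℕ} (A : Matrix (Fin k) (Fin k) ℝ) (x : Fin k → ℝ) : ℝ :=
  Real.sqrt (innerSigma A x x)

/-- Euclidean norm on ℝ^k. -/
def l2norm {k : ℕ} (v : Fin k → ℝ) : ℝ := Real.sqrt (∑ i, v i ^ 2)

/-- ℓ1 norm on ℝ^k. -/
def l1norm {k : ℕ} (v : Fin k → ℝ) : ℝ := ∑ i, |v i|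

/-- `D` is a `(t,α)`-dictionary for `A`: every `t`-sparse `v` with ‖v‖_Σ > 0 correlates
with some element of `D` at level `α` under the Σ-inner product. -/
def IsDictionary {k : ℕ} (t : ℕ) (α : ℝ) (A : Matrix (Fin k) (Fin k) ℝ) {N : ℕ}
    (D : Fin N → Fin k → ℝ) : Prop :=
  ∀ v : Fin k → ℝ, SparseVec t v → 0 < normSigma A v →
    ∃ i, 0 < normSigma A (D i) ∧ α * (normSigma A v * normSigma A (D i)) ≤ |innerSigma A v (D i)|

/-- 𝒩_{t,α}(Σ): the minimum size of a `(t,α)`-dictionary (as an element of ℕ ∪ {∞}). -/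
def coveringNumber {k : ℕ} (t : ℕ) (α : ℝ) (A : Matrix (Fin k) (Fin k) ℝ) : ℝ≥0∞ :=
  sInf {c : ℝ≥0∞ | ∃ (N : ℕ) (D : Fin N → Fin k → ℝ), IsDictionary t α A D ∧ c = (N : ℝ≥0∞)}

/-!
Join two coordinates by an edge when their `Σ`-inner product is at least `l / t` in absolute value,
where `l` is the least eigenvalue. By Bessel's inequality this graph has degrees at most `(κ t)²`,
so it has at most `n k! (κ t)^(2k)` connected sets of `k + 1` vertices; the dictionary collects
`Σ`-orthonormal bases of the coordinate subspaces of all connected sets of at most `t` vertices.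
The restrictions of a `t`-sparse `v` to the connected components of its support sum to `v`, so one
of them, say `w`, has `⟨v, w⟩ ≥ ‖v‖² / t`. Distinct components are almost orthogonal, so `w` is not
much longer than `v`, and some element of the basis for the component of `w` correlates with `v`.
-/

open Finset
open scoped Nat InnerProductSpace

section ConnectedFinsets

variable {V : Type*} {G : SimpleGraph V}

theorem connected_induce_image {V' : Type*} {G' : SimpleGraph V'} (f : G →g G') {s : Set V}
    (hs : (G.induce s).Connected) : (G'.induce (f '' s)).Connected :=
  hs.map (SimpleGraph.induceHom f (Set.mapsTo_image f s)) Set.imageFactorization_surjective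

/-- The finsets of `k` vertices that induce a connected subgraph of `G`. -/
def connectedFinsets [Fintype V] (G : SimpleGraph V) (k : ℕ) : Finset (Finset V) :=
  open Classical in {T ∈ univ.powersetCard k | (G.induce (T : Set V)).Connected}

theorem mem_connectedFinsets [Fintype V] {k : ℕ} {T : Finset V} :
    T ∈ connectedFinsets G k ↔ #T = k ∧ (G.induce (T : Set V)).Connected := by
  simp [connectedFinsets]

theorem exists_connected_induce_erase [DecidableEq V] {T : Finset V}
    (hT : (G.induce (T : Set V)).Connected) (hcard : 1 < #T) :
    ∃ u ∈ T, (G.induce (T.erase u : Set V)).Connected ∧ ∃ v ∈ T.erase u, G.Adj v u := by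
  have : Nontrivial (T : Set V) := (one_lt_card_iff_nontrivial.1 hcard).coe_sort
  obtain ⟨u, hu⟩ := hT.exists_connected_induce_compl_singleton_of_finite_nontrivial
  obtain ⟨v, huv⟩ := hT.preconnected.exists_adj_of_nontrivial u
  refine ⟨u, u.2, ?_, v, mem_erase.2 ⟨Subtype.coe_ne_coe.2 huv.ne', v.2⟩, huv.symm⟩
  have himage : Subtype.val '' ({u}ᶜ : Set (T : Set V)) = T.erase u.1 := by
    ext v
    simp only [Set.mem_image, Set.mem_compl_singleton_iff, ne_eq, Subtype.ext_iff, Subtype.exists,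
      exists_and_left, exists_prop, exists_eq_right_right, mem_coe, mem_erase]
  exact himage ▸ connected_induce_image (SimpleGraph.Embedding.induce (T : Set V)).toHom hu

theorem card_connectedFinsets_add_two_le [Fintype V] [DecidableRel G.Adj] {d : ℕ}
    (hd : ∀ v, G.degree v ≤ d) (k : ℕ) :
    #(connectedFinsets G (k + 2)) ≤ #(connectedFinsets G (k + 1)) * ((k + 1) * d) := by
  classical
  let extensions (T : Finset V) : Finset (Finset V) :=
    (T.biUnion (G.neighborFinset ·)).image (insert · T)
  have hsub : connectedFinsets G (k + 2) ⊆ (connectedFinsets G (k + 1)).biUnion extensions := by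
    intro T hT
    obtain ⟨hcard, hconn⟩ := mem_connectedFinsets.1 hT
    obtain ⟨u, hu, herase, v, hv, hvu⟩ := exists_connected_induce_erase hconn (by lia)
    refine mem_biUnion.2 ⟨T.erase u, mem_connectedFinsets.2 ⟨?_, herase⟩, ?_⟩
    · rw [card_erase_of_mem hu, hcard]
      rfl
    · exact mem_image.2 ⟨u, mem_biUnion.2 ⟨v, hv, by simpa using hvu⟩, insert_erase hu⟩
  refine (card_le_card hsub).trans (card_biUnion_le_card_mul _ _ _ fun T hT ↦ ?_)
  calc #(extensions T) ≤ #(T.biUnion (G.neighborFinset ·)) := card_image_le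
    _ ≤ #T * d := card_biUnion_le_card_mul _ _ _ fun v _ ↦ hd v
    _ = (k + 1) * d := by rw [(mem_connectedFinsets.1 hT).1]

theorem card_connectedFinsets_succ_le [Fintype V] [DecidableRel G.Adj] {d : ℕ}
    (hd : ∀ v, G.degree v ≤ d) (k : ℕ) :
    #(connectedFinsets G (k + 1)) ≤ Fintype.card V * (k ! * d ^ k) := by
  induction k with
  | zero =>
    have hsub : connectedFinsets G 1 ⊆ univ.powersetCard 1 := fun T hT ↦
      mem_powersetCard_univ.2 (mem_connectedFinsets.1 hT).1
    simpa using card_le_card hsub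
  | succ k ih =>
    calc #(connectedFinsets G (k + 2))
      _ ≤ Fintype.card V * (k ! * d ^ k) * ((k + 1) * d) :=
        (card_connectedFinsets_add_two_le hd k).trans (Nat.mul_le_mul_right _ ih)
      _ = Fintype.card V * ((k + 1)! * d ^ (k + 1)) := by
        rw [Nat.factorial_succ]
        ring

theorem exists_connected_subset_le_sum {M : Type*} [AddCommMonoid M] [LinearOrder M]
    [IsOrderedCancelAddMonoid M] {S : Finset V} (hS : S.Nonempty) (w : V → M) {b : M}
    (hb : 0 ≤ b) (hbS : #S • b ≤ ∑ i ∈ S, w i) :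
    ∃ T ⊆ S, (G.induce (T : Set V)).Connected ∧ (∀ i ∈ T, ∀ j ∈ S, j ∉ T → ¬G.Adj i j) ∧
      b ≤ ∑ i ∈ T, w i := by
  classical
  let component (i : S) := (G.induce (S : Set V)).connectedComponentMk i
  have hcard : #(S.attach.image component) • b ≤ ∑ i ∈ S.attach, w i := by
    rw [sum_attach S w]
    exact (nsmul_le_nsmul_left hb (card_image_le.trans_eq S.card_attach)).trans hbS
  obtain ⟨K, -, hK⟩ := exists_le_sum_fiber_of_maps_to_of_nsmul_le_sum
    (fun _ ↦ mem_image_of_mem component) (hS.attach.image component) hcard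
  have himage : Subtype.val '' K.supp =
      (({i ∈ S.attach | component i = K}.map (.subtype (· ∈ S)) : Finset V) : Set V) := by
    ext
    simp [component]
  refine ⟨{i ∈ S.attach | component i = K}.map (.subtype (· ∈ S)), ?_, ?_, ?_, ?_⟩
  · exact map_subtype_subset _
  · exact himage ▸ connected_induce_image (SimpleGraph.Embedding.induce (S : Set V)).toHom
      K.connected_toSimpleGraph
  · intro _ hiT j hjS hjT hij
    obtain ⟨i, hi, rfl⟩ := mem_map.1 hiT
    have hji : component ⟨j, hjS⟩ = component i :=
      SimpleGraph.ConnectedComponent.connectedComponentMk_eq_of_adj hij.symm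
    exact hjT (mem_map.2 ⟨⟨j, hjS⟩, by simpa [hji] using hi, rfl⟩)
  · rwa [sum_map]

end ConnectedFinsets

section InnerProduct

variable {ι E : Type*} [NormedAddCommGroup E] [InnerProductSpace ℝ E] {x : ι → E}

/-- The graph joining the indices of vectors of the family `x` whose inner product is at least `c`
in absolute value: finsets of indices without edges between them span almost orthogonal spaces. -/
def correlationGraph (x : ι → E) (c : ℝ) : SimpleGraph ι where
  Adj i j := i ≠ j ∧ c ≤ |⟪x i, x j⟫_ℝ|
  symm := ⟨fun i j h ↦ ⟨h.1.symm, real_inner_comm (x i) (x j) ▸ h.2⟩⟩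
  loopless := ⟨fun _ h ↦ h.1 rfl⟩

theorem correlationGraph_adj {c : ℝ} {i j : ι} :
    (correlationGraph x c).Adj i j ↔ i ≠ j ∧ c ≤ |⟪x i, x j⟫_ℝ| :=
  Iff.rfl

theorem sum_inner_sq_le_of_upper_riesz_bound [Fintype ι] {M : ℝ} (hM₀ : 0 ≤ M)
    (hM : ∀ a : ι → ℝ, ‖∑ i, a i • x i‖ ^ 2 ≤ M * ∑ i, a i ^ 2) (y : E) :
    ∑ i, ⟪y, x i⟫_ℝ ^ 2 ≤ M * ‖y‖ ^ 2 := by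
  set s := ∑ i, ⟪y, x i⟫_ℝ ^ 2 with hs
  have hs_eq : s = ⟪y, ∑ i, ⟪y, x i⟫_ℝ • x i⟫_ℝ := by
    simp only [hs, inner_sum, real_inner_smul_right, sq]
  have hs_sq : s * s ≤ M * ‖y‖ ^ 2 * s :=
    calc s * s = |⟪y, ∑ i, ⟪y, x i⟫_ℝ • x i⟫_ℝ| ^ 2 := by rw [← hs_eq, sq_abs, sq]
      _ ≤ (‖y‖ * ‖∑ i, ⟪y, x i⟫_ℝ • x i‖) ^ 2 := by gcongr; exact abs_real_inner_le_norm _ _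
      _ = ‖y‖ ^ 2 * ‖∑ i, ⟪y, x i⟫_ℝ • x i‖ ^ 2 := mul_pow _ _ _
      _ ≤ ‖y‖ ^ 2 * (M * s) := by gcongr; exact hM _
      _ = M * ‖y‖ ^ 2 * s := by ring
  rcases (sum_nonneg fun i _ ↦ sq_nonneg ⟪y, x i⟫_ℝ : 0 ≤ s).eq_or_lt with hs₀ | hs₀
  · exact hs₀.symm.trans_le (by positivity)
  · exact le_of_mul_le_mul_right hs_sq hs₀

theorem norm_sq_le_of_upper_riesz_bound [Fintype ι] {M : ℝ}
    (hM : ∀ a : ι → ℝ, ‖∑ i, a i • x i‖ ^ 2 ≤ M * ∑ i, a i ^ 2) (i : ι) : ‖x i‖ ^ 2 ≤ M := by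
  classical
  simpa [Pi.single_apply] using hM (Pi.single i 1)

theorem le_norm_sq_of_lower_riesz_bound [Fintype ι] {l : ℝ}
    (hl : ∀ a : ι → ℝ, l * ∑ i, a i ^ 2 ≤ ‖∑ i, a i • x i‖ ^ 2) (i : ι) : l ≤ ‖x i‖ ^ 2 := by
  classical
  simpa [Pi.single_apply] using hl (Pi.single i 1)

theorem sum_sq_le_of_lower_riesz_bound [Fintype ι] {l : ℝ}
    (hl : ∀ a : ι → ℝ, l * ∑ i, a i ^ 2 ≤ ‖∑ i, a i • x i‖ ^ 2) (S : Finset ι) (a : ι → ℝ) :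
    l * ∑ i ∈ S, a i ^ 2 ≤ ‖∑ i ∈ S, a i • x i‖ ^ 2 := by
  classical
  simpa [ite_pow, ite_smul, sum_ite_mem] using hl fun i ↦ if i ∈ S then a i else 0

theorem div_mul_card_mul_sum_sq_le_of_lower_riesz_bound [Fintype ι] {l : ℝ} (hl₀ : 0 ≤ l)
    (hl : ∀ a : ι → ℝ, l * ∑ i, a i ^ 2 ≤ ‖∑ i, a i • x i‖ ^ 2) {S : Finset ι} {t : ℕ}
    (hS : #S ≤ t) (a : ι → ℝ) :
    l / t * (#S * ∑ i ∈ S, a i ^ 2) ≤ ‖∑ i ∈ S, a i • x i‖ ^ 2 :=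
  calc l / t * (#S * ∑ i ∈ S, a i ^ 2)
    _ = #S / t * (l * ∑ i ∈ S, a i ^ 2) := by ring
    _ ≤ l * ∑ i ∈ S, a i ^ 2 :=
      mul_le_of_le_one_left (by positivity)
        (div_le_one_of_le₀ (by exact_mod_cast hS) (by positivity))
    _ ≤ ‖∑ i ∈ S, a i • x i‖ ^ 2 := sum_sq_le_of_lower_riesz_bound hl S a

theorem degree_correlationGraph_le [Fintype ι] {c M : ℝ} [DecidableRel (correlationGraph x c).Adj]
    (hc : 0 < c) (hM : ∀ a : ι → ℝ, ‖∑ i, a i • x i‖ ^ 2 ≤ M * ∑ i, a i ^ 2) (i : ι) :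
    ((correlationGraph x c).degree i : ℝ) ≤ (M / c) ^ 2 := by
  have hiM : ‖x i‖ ^ 2 ≤ M := norm_sq_le_of_upper_riesz_bound hM i
  have hM₀ : 0 ≤ M := (sq_nonneg _).trans hiM
  rw [div_pow, le_div_iff₀ (by positivity)]
  calc ((correlationGraph x c).degree i : ℝ) * c ^ 2
      = ∑ _j ∈ (correlationGraph x c).neighborFinset i, c ^ 2 := by simp
    _ ≤ ∑ j ∈ (correlationGraph x c).neighborFinset i, ⟪x i, x j⟫_ℝ ^ 2 := by
      refine sum_le_sum fun j hj ↦ ?_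
      rw [← sq_abs ⟪x i, x j⟫_ℝ]
      rw [SimpleGraph.mem_neighborFinset, correlationGraph_adj] at hj
      exact pow_le_pow_left₀ hc.le hj.2 2
    _ ≤ ∑ j, ⟪x i, x j⟫_ℝ ^ 2 :=
      sum_le_univ_sum_of_nonneg fun j ↦ sq_nonneg _
    _ ≤ M * ‖x i‖ ^ 2 := sum_inner_sq_le_of_upper_riesz_bound hM₀ hM (x i)
    _ ≤ M * M := by gcongr
    _ = M ^ 2 := (sq M).symm

theorem abs_inner_sum_smul_le {S T : Finset ι} {c : ℝ}
    (hc : ∀ i ∈ S, ∀ j ∈ T, |⟪x i, x j⟫_ℝ| ≤ c) (a : ι → ℝ) :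
    |⟪∑ i ∈ S, a i • x i, ∑ j ∈ T, a j • x j⟫_ℝ| ≤ c * ((∑ i ∈ S, |a i|) * ∑ j ∈ T, |a j|) := by
  rw [sum_inner, sum_mul_sum, mul_sum]
  refine (abs_sum_le_sum_abs _ _).trans (sum_le_sum fun i hi ↦ ?_)
  rw [inner_sum, mul_sum]
  refine (abs_sum_le_sum_abs _ _).trans (sum_le_sum fun j hj ↦ ?_)
  rw [real_inner_smul_left, real_inner_smul_right, abs_mul, abs_mul]
  calc |a i| * (|a j| * |⟪x i, x j⟫_ℝ|) ≤ |a i| * (|a j| * c) := by gcongr; exact hc i hi j hj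
    _ = c * (|a i| * |a j|) := by ring

theorem four_mul_sum_abs_mul_sum_abs_sdiff_le [DecidableEq ι] {S T : Finset ι} (hTS : T ⊆ S)
    (a : ι → ℝ) :
    4 * ((∑ i ∈ T, |a i|) * ∑ i ∈ S \ T, |a i|) ≤ #S * ∑ i ∈ S, a i ^ 2 :=
  calc 4 * ((∑ i ∈ T, |a i|) * ∑ i ∈ S \ T, |a i|)
    _ ≤ ((∑ i ∈ S \ T, |a i|) + ∑ i ∈ T, |a i|) ^ 2 := by
      linarith [four_mul_le_sq_add (∑ i ∈ T, |a i|) (∑ i ∈ S \ T, |a i|)]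
    _ = (∑ i ∈ S, |a i|) ^ 2 := by rw [sum_sdiff hTS]
    _ ≤ #S * ∑ i ∈ S, |a i| ^ 2 := sq_sum_le_card_mul_sum_sq
    _ = #S * ∑ i ∈ S, a i ^ 2 := by simp only [sq_abs]

theorem two_mul_norm_sq_le_of_abs_inner_le {u r : E} (h : 4 * |⟪u, r⟫_ℝ| ≤ ‖u + r‖ ^ 2) :
    2 * ‖u‖ ^ 2 ≤ 3 * ‖u + r‖ ^ 2 := by
  linarith [norm_add_sq_real u r, neg_abs_le ⟪u, r⟫_ℝ, sq_nonneg ‖r‖]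

theorem two_mul_norm_sq_sum_le_of_not_adj {S T : Finset ι} (hTS : T ⊆ S) {c : ℝ} (hc : 0 ≤ c)
    (hT : ∀ i ∈ T, ∀ j ∈ S, j ∉ T → ¬(correlationGraph x c).Adj i j) {a : ι → ℝ}
    (ha : c * (#S * ∑ i ∈ S, a i ^ 2) ≤ ‖∑ i ∈ S, a i • x i‖ ^ 2) :
    2 * ‖∑ i ∈ T, a i • x i‖ ^ 2 ≤ 3 * ‖∑ i ∈ S, a i • x i‖ ^ 2 := by
  classical
  have hsplit : ∑ i ∈ S, a i • x i = ∑ i ∈ T, a i • x i + ∑ i ∈ S \ T, a i • x i := by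
    rw [add_comm, sum_sdiff hTS]
  have hsmall : ∀ i ∈ T, ∀ j ∈ S \ T, |⟪x i, x j⟫_ℝ| ≤ c := by
    intro i hi j hj
    obtain ⟨hjS, hjT⟩ := mem_sdiff.1 hj
    by_contra! hcij
    exact hT i hi j hjS hjT (correlationGraph_adj.2 ⟨fun hij ↦ hjT (hij ▸ hi), hcij.le⟩)
  rw [hsplit]
  refine two_mul_norm_sq_le_of_abs_inner_le ?_
  rw [← hsplit]
  calc 4 * |⟪∑ i ∈ T, a i • x i, ∑ i ∈ S \ T, a i • x i⟫_ℝ|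
    _ ≤ 4 * (c * ((∑ i ∈ T, |a i|) * ∑ i ∈ S \ T, |a i|)) := by
      gcongr; exact abs_inner_sum_smul_le hsmall a
    _ = c * (4 * ((∑ i ∈ T, |a i|) * ∑ i ∈ S \ T, |a i|)) := by ring
    _ ≤ c * (#S * ∑ i ∈ S, a i ^ 2) :=
      mul_le_mul_of_nonneg_left (four_mul_sum_abs_mul_sum_abs_sdiff_le hTS a) hc
    _ ≤ ‖∑ i ∈ S, a i • x i‖ ^ 2 := ha

theorem exists_connected_subset_norm_sq_le_inner {S : Finset ι} {a : ι → ℝ} {c : ℝ} (hc : 0 ≤ c)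
    (ha : c * (#S * ∑ i ∈ S, a i ^ 2) ≤ ‖∑ i ∈ S, a i • x i‖ ^ 2) (hS : S.Nonempty) :
    ∃ T ⊆ S, ((correlationGraph x c).induce (T : Set ι)).Connected ∧
      ‖∑ i ∈ S, a i • x i‖ ^ 2 ≤ #S * ⟪∑ i ∈ S, a i • x i, ∑ i ∈ T, a i • x i⟫_ℝ ∧
      2 * ‖∑ i ∈ T, a i • x i‖ ^ 2 ≤ 3 * ‖∑ i ∈ S, a i • x i‖ ^ 2 := by
  set v := ∑ i ∈ S, a i • x i with hv
  have hcard : (0 : ℝ) < #S := by exact_mod_cast hS.card_pos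
  have hsum : #S • (‖v‖ ^ 2 / #S) ≤ ∑ i ∈ S, ⟪v, a i • x i⟫_ℝ := by
    rw [← inner_sum, ← hv, real_inner_self_eq_norm_sq, nsmul_eq_mul, mul_div_cancel₀ _ hcard.ne']
  obtain ⟨T, hTS, hconn, hT, hle⟩ := exists_connected_subset_le_sum (G := correlationGraph x c) hS
    (fun i ↦ ⟪v, a i • x i⟫_ℝ) (by positivity) hsum
  refine ⟨T, hTS, hconn, ?_, two_mul_norm_sq_sum_le_of_not_adj hTS hc hT ha⟩
  rwa [← inner_sum, div_le_iff₀' hcard] at hle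

theorem exists_finset_forall_inner_sq_le_finrank (W : Submodule ℝ E) [FiniteDimensional ℝ W] :
    ∃ D : Finset E, #D ≤ Module.finrank ℝ W ∧ (∀ d ∈ D, ‖d‖ = 1) ∧
      ∀ v, ∀ w ∈ W, w ≠ 0 →
        ∃ d ∈ D, ⟪v, w⟫_ℝ ^ 2 ≤ Module.finrank ℝ W * ⟪v, d⟫_ℝ ^ 2 * ‖w‖ ^ 2 := by
  classical
  let b := stdOrthonormalBasis ℝ W
  refine ⟨univ.image fun k ↦ (b k : E), card_image_le.trans_eq (by simp), ?_, fun v w hw hw₀ ↦ ?_⟩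
  · simp [← W.coe_norm]
  set p : W := W.orthogonalProjectionOnto v with hp
  have hp_inner (z : W) : ⟪p, z⟫_ℝ = ⟪v, z⟫_ℝ := by
    simp [hp]
  have hnonempty : (univ : Finset (Fin (Module.finrank ℝ W))).Nonempty := by
    have : Nontrivial W := ⟨⟨w, hw⟩, 0, by simpa [Subtype.ext_iff] using hw₀⟩
    have : NeZero (Module.finrank ℝ W) := ⟨Module.finrank_pos.ne'⟩
    exact univ_nonempty
  obtain ⟨k, -, hk⟩ := exists_max_image univ (fun k ↦ ⟪p, b k⟫_ℝ ^ 2) hnonempty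
  refine ⟨b k, mem_image_of_mem _ (mem_univ k), ?_⟩
  have hp_norm : ‖p‖ ^ 2 ≤ Module.finrank ℝ W * ⟪v, b k⟫_ℝ ^ 2 :=
    calc ‖p‖ ^ 2 = ∑ j, ⟪p, b j⟫_ℝ ^ 2 := by
          simpa using (b.sum_sq_norm_inner_left p).symm
      _ ≤ ∑ _j : Fin (Module.finrank ℝ W), ⟪p, b k⟫_ℝ ^ 2 := sum_le_sum hk
      _ = Module.finrank ℝ W * ⟪v, b k⟫_ℝ ^ 2 := by simp [hp_inner]
  calc ⟪v, w⟫_ℝ ^ 2 = |⟪p, ⟨w, hw⟩⟫_ℝ| ^ 2 := by rw [hp_inner, sq_abs]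
    _ ≤ (‖p‖ * ‖w‖) ^ 2 := by gcongr; exact abs_real_inner_le_norm p ⟨w, hw⟩
    _ = ‖p‖ ^ 2 * ‖w‖ ^ 2 := mul_pow _ _ _
    _ ≤ Module.finrank ℝ W * ⟪v, b k⟫_ℝ ^ 2 * ‖w‖ ^ 2 := by gcongr

theorem exists_finset_forall_inner_sq_le_of_connected [Fintype ι] (x : ι → E) {G : SimpleGraph ι}
    [DecidableRel G.Adj] {d : ℕ} (hd : ∀ i, G.degree i ≤ d) (t : ℕ) :
    ∃ D : Finset E, #D ≤ Fintype.card ι * ∑ k ∈ range t, (k + 1)! * d ^ k ∧ (∀ e ∈ D, ‖e‖ = 1) ∧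
      ∀ T : Finset ι, (G.induce (T : Set ι)).Connected → #T ≤ t →
        ∀ v, ∀ w ∈ Submodule.span ℝ (x '' T), w ≠ 0 →
          ∃ e ∈ D, ⟪v, w⟫_ℝ ^ 2 ≤ t * ⟪v, e⟫_ℝ ^ 2 * ‖w‖ ^ 2 := by
  classical
  have hfinite (T : Finset ι) : FiniteDimensional ℝ (Submodule.span ℝ (x '' T)) :=
    FiniteDimensional.span_of_finite ℝ (T.finite_toSet.image x)
  have hfinrank (T : Finset ι) : Module.finrank ℝ (Submodule.span ℝ (x '' T)) ≤ #T := by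
    rw [← coe_image]
    exact (finrank_span_finset_le_card _).trans card_image_le
  choose B hcard hunit hB using fun T : Finset ι ↦
    exists_finset_forall_inner_sq_le_finrank (Submodule.span ℝ (x '' T))
  refine ⟨(range t).biUnion fun k ↦ (connectedFinsets G (k + 1)).biUnion B, ?_, ?_, ?_⟩
  · rw [mul_sum]
    refine card_biUnion_le.trans (sum_le_sum fun k _ ↦ ?_)
    calc #((connectedFinsets G (k + 1)).biUnion B)
      _ ≤ #(connectedFinsets G (k + 1)) * (k + 1) :=
        card_biUnion_le_card_mul _ _ _ fun T hT ↦
          ((hcard T).trans (hfinrank T)).trans_eq (mem_connectedFinsets.1 hT).1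
      _ ≤ Fintype.card ι * (k ! * d ^ k) * (k + 1) :=
        Nat.mul_le_mul_right _ (card_connectedFinsets_succ_le hd k)
      _ = Fintype.card ι * ((k + 1)! * d ^ k) := by
        rw [Nat.factorial_succ]
        ring
  · simp only [mem_biUnion]
    rintro e ⟨k, -, T, -, he⟩
    exact hunit T e he
  · intro T hconn hT v w hw hw₀
    have hpos : 0 < #T := card_pos.2 (coe_nonempty.1 (Set.nonempty_coe_sort.1 hconn.nonempty))
    obtain ⟨e, he, hle⟩ := hB T v w hw hw₀
    refine ⟨e, mem_biUnion.2 ⟨#T - 1, mem_range.2 (by lia), mem_biUnion.2 ⟨T, ?_, he⟩⟩, ?_⟩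
    · exact mem_connectedFinsets.2 ⟨by lia, hconn⟩
    · refine hle.trans ?_
      gcongr
      exact (hfinrank T).trans hT

theorem sum_factorial_succ_mul_pow_le {d : ℕ} (hd : 1 ≤ d) (t : ℕ) :
    ∑ k ∈ range t, (k + 1)! * d ^ k ≤ t * (t ^ t * d ^ t) := by
  rw [← smul_eq_mul, ← card_range t, ← sum_const, card_range]
  refine sum_le_sum fun k hk ↦ ?_
  have hkt : k + 1 ≤ t := mem_range.1 hk
  calc (k + 1)! * d ^ k ≤ t ! * d ^ t :=
        Nat.mul_le_mul (Nat.factorial_le hkt) (Nat.pow_le_pow_right hd (by lia))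
    _ ≤ t ^ t * d ^ t := Nat.mul_le_mul_right _ (Nat.factorial_le_pow t)

theorem two_mul_norm_sq_le_of_inner_sq_le {v w e : E} {s t : ℝ} (ht : 0 ≤ t) (hv : v ≠ 0)
    (hvw : ‖v‖ ^ 2 ≤ s * ⟪v, w⟫_ℝ) (hw : 2 * ‖w‖ ^ 2 ≤ 3 * ‖v‖ ^ 2)
    (he : ⟪v, w⟫_ℝ ^ 2 ≤ t * ⟪v, e⟫_ℝ ^ 2 * ‖w‖ ^ 2) :
    2 * ‖v‖ ^ 2 ≤ 3 * (s ^ 2 * t) * ⟪v, e⟫_ℝ ^ 2 := by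
  have hv₀ : 0 < ‖v‖ ^ 2 := by positivity
  refine le_of_mul_le_mul_right ?_ hv₀
  calc 2 * ‖v‖ ^ 2 * ‖v‖ ^ 2 = 2 * (‖v‖ ^ 2) ^ 2 := by ring
    _ ≤ 2 * (s * ⟪v, w⟫_ℝ) ^ 2 := by gcongr
    _ = 2 * s ^ 2 * ⟪v, w⟫_ℝ ^ 2 := by ring
    _ ≤ 2 * s ^ 2 * (t * ⟪v, e⟫_ℝ ^ 2 * ‖w‖ ^ 2) := by gcongr
    _ = s ^ 2 * t * ⟪v, e⟫_ℝ ^ 2 * (2 * ‖w‖ ^ 2) := by ring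
    _ ≤ s ^ 2 * t * ⟪v, e⟫_ℝ ^ 2 * (3 * ‖v‖ ^ 2) := by gcongr
    _ = 3 * (s ^ 2 * t) * ⟪v, e⟫_ℝ ^ 2 * ‖v‖ ^ 2 := by ring

theorem exists_two_mul_norm_sq_le_of_forall_connected [Fintype ι] {l : ℝ} (hl₀ : 0 ≤ l)
    (hl : ∀ a : ι → ℝ, l * ∑ i, a i ^ 2 ≤ ‖∑ i, a i • x i‖ ^ 2) {t : ℕ} {D : Finset E}
    (hD : ∀ T : Finset ι, ((correlationGraph x (l / t)).induce (T : Set ι)).Connected → #T ≤ t →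
      ∀ v, ∀ w ∈ Submodule.span ℝ (x '' T), w ≠ 0 →
        ∃ e ∈ D, ⟪v, w⟫_ℝ ^ 2 ≤ t * ⟪v, e⟫_ℝ ^ 2 * ‖w‖ ^ 2)
    {S : Finset ι} {a : ι → ℝ} (hS : #S ≤ t) (hv : ∑ i ∈ S, a i • x i ≠ 0) :
    ∃ e ∈ D, 2 * ‖∑ i ∈ S, a i • x i‖ ^ 2 ≤ 3 * t ^ 3 * ⟪∑ i ∈ S, a i • x i, e⟫_ℝ ^ 2 := by
  have hS₀ : S.Nonempty := nonempty_of_sum_ne_zero hv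
  have ha := div_mul_card_mul_sum_sq_le_of_lower_riesz_bound hl₀ hl hS a
  obtain ⟨T, hTS, hconn, hvw, hw⟩ := exists_connected_subset_norm_sq_le_inner
    (by positivity) ha hS₀
  set v := ∑ i ∈ S, a i • x i
  set w := ∑ i ∈ T, a i • x i with hw_def
  have hw_span : w ∈ Submodule.span ℝ (x '' T) := by
    rw [hw_def]
    exact Submodule.sum_smul_mem _ _ fun i hi ↦
      Submodule.subset_span (Set.mem_image_of_mem x hi)
  have hw₀ : w ≠ 0 := by
    intro hw₀
    rw [hw₀, inner_zero_right, mul_zero] at hvw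
    exact hvw.not_gt (by positivity)
  obtain ⟨e, he, hve⟩ := hD T hconn ((card_le_card hTS).trans hS) v w hw_span hw₀
  refine ⟨e, he, ?_⟩
  calc 2 * ‖v‖ ^ 2 ≤ 3 * ((#S : ℝ) ^ 2 * t) * ⟪v, e⟫_ℝ ^ 2 :=
        two_mul_norm_sq_le_of_inner_sq_le (by positivity) hv hvw hw hve
    _ ≤ 3 * ((t : ℝ) ^ 2 * t) * ⟪v, e⟫_ℝ ^ 2 := by gcongr
    _ = 3 * t ^ 3 * ⟪v, e⟫_ℝ ^ 2 := by ring

theorem exists_dictionary_of_riesz_bounds [Fintype ι] [Nonempty ι] {l M : ℝ} (hl₀ : 0 < l)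
    (hl : ∀ a : ι → ℝ, l * ∑ i, a i ^ 2 ≤ ‖∑ i, a i • x i‖ ^ 2)
    (hM : ∀ a : ι → ℝ, ‖∑ i, a i • x i‖ ^ 2 ≤ M * ∑ i, a i ^ 2) {t : ℕ} (ht : 1 ≤ t) :
    ∃ D : Finset E, (#D : ℝ) ≤ t ^ (3 * t + 1) * (M / l) ^ (2 * t) * Fintype.card ι ∧
      (∀ d ∈ D, ‖d‖ = 1) ∧
      ∀ (S : Finset ι) (a : ι → ℝ), #S ≤ t → ∑ i ∈ S, a i • x i ≠ 0 →
        ∃ d ∈ D, 2 * ‖∑ i ∈ S, a i • x i‖ ^ 2 ≤ 3 * t ^ 3 * ⟪∑ i ∈ S, a i • x i, d⟫_ℝ ^ 2 := by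
  classical
  have hlM : l ≤ M := (le_norm_sq_of_lower_riesz_bound hl (Classical.arbitrary ι)).trans
    (norm_sq_le_of_upper_riesz_bound hM _)
  have ht₀ : (1 : ℝ) ≤ t := by exact_mod_cast ht
  have hc : 0 < l / t := by positivity
  let d := ⌊(t * (M / l)) ^ 2⌋₊
  have hd_one : 1 ≤ d := Nat.one_le_floor_iff _ |>.2 <|
    one_le_pow₀ (one_le_mul_of_one_le_of_one_le ht₀ ((one_le_div hl₀).2 hlM))
  have hdegree (i : ι) : (correlationGraph x (l / t)).degree i ≤ d := by
    refine Nat.le_floor ((degree_correlationGraph_le hc hM i).trans_eq ?_)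
    field_simp
  obtain ⟨D, hcard, hunit, hD⟩ := exists_finset_forall_inner_sq_le_of_connected x hdegree t
  refine ⟨D, ?_, hunit, fun S a hS hv ↦ ?_⟩
  · calc (#D : ℝ) ≤ (Fintype.card ι * (t * (t ^ t * d ^ t)) : ℕ) := by
          exact_mod_cast hcard.trans <|
            Nat.mul_le_mul_left _ (sum_factorial_succ_mul_pow_le hd_one t)
      _ ≤ Fintype.card ι * (t * (t ^ t * ((t * (M / l)) ^ 2) ^ t)) := by
        push_cast
        gcongr
        exact Nat.floor_le (sq_nonneg _)
      _ = t ^ (3 * t + 1) * (M / l) ^ (2 * t) * Fintype.card ι := by ring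
  · exact exists_two_mul_norm_sq_le_of_forall_connected hl₀.le hl hD hS hv

end InnerProduct

section Matrix

open scoped MatrixOrder ComplexOrder

variable {ι : Type*} [Fintype ι] [DecidableEq ι]

theorem mul_dotProduct_le_of_le_eigenvalues {𝕜 : Type*} [RCLike 𝕜] {A : Matrix ι ι 𝕜}
    (hA : A.IsHermitian) {l : ℝ} (hl : ∀ i, l ≤ hA.eigenvalues i) (a : ι → 𝕜) :
    l * (star a ⬝ᵥ a) ≤ star a ⬝ᵥ A *ᵥ a := by
  have hA_le : algebraMap ℝ (Matrix ι ι 𝕜) l ≤ A := by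
    rw [algebraMap_le_iff_le_spectrum hA, hA.spectrum_real_eq_range_eigenvalues]
    exact Set.forall_mem_range.2 hl
  have hnonneg := (Matrix.le_iff.1 hA_le).dotProduct_mulVec_nonneg a
  rwa [Algebra.algebraMap_eq_smul_one, sub_mulVec, smul_mulVec, one_mulVec, dotProduct_sub,
    dotProduct_smul, RCLike.real_smul_eq_coe_mul, sub_nonneg] at hnonneg

theorem dotProduct_le_mul_of_eigenvalues_le {𝕜 : Type*} [RCLike 𝕜] {A : Matrix ι ι 𝕜}
    (hA : A.IsHermitian) {M : ℝ} (hM : ∀ i, hA.eigenvalues i ≤ M) (a : ι → 𝕜) :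
    star a ⬝ᵥ A *ᵥ a ≤ M * (star a ⬝ᵥ a) := by
  have hA_le : A ≤ algebraMap ℝ (Matrix ι ι 𝕜) M := by
    rw [le_algebraMap_iff_spectrum_le hA, hA.spectrum_real_eq_range_eigenvalues]
    exact Set.forall_mem_range.2 hM
  have hnonneg := (Matrix.le_iff.1 hA_le).dotProduct_mulVec_nonneg a
  rwa [Algebra.algebraMap_eq_smul_one, sub_mulVec, smul_mulVec, one_mulVec, dotProduct_sub,
    dotProduct_smul, RCLike.real_smul_eq_coe_mul, sub_nonneg] at hnonneg

theorem exists_dictionary_of_eigenvalue_bounds [Nonempty ι] {A : Matrix ι ι ℝ} (hA : A.PosDef)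
    {l M : ℝ} (hl₀ : 0 < l) (hl : ∀ i, l ≤ hA.1.eigenvalues i)
    (hM : ∀ i, hA.1.eigenvalues i ≤ M) {t : ℕ} (ht : 1 ≤ t) :
    ∃ D : Finset (ι → ℝ), (#D : ℝ) ≤ t ^ (3 * t + 1) * (M / l) ^ (2 * t) * Fintype.card ι ∧
      (∀ d ∈ D, d ⬝ᵥ A *ᵥ d = 1) ∧
      ∀ v : ι → ℝ, v ≠ 0 → #{i | v i ≠ 0} ≤ t →
        ∃ d ∈ D, 2 * (v ⬝ᵥ A *ᵥ v) ≤ 3 * t ^ 3 * (v ⬝ᵥ A *ᵥ d) ^ 2 := by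
  -- The two middle instances keep `‖·‖` from being elaborated as the sup norm of `ι → ℝ`.
  let := A.toNormedAddCommGroup hA
  let := A.toSeminormedAddCommGroup hA.posSemidef
  let := this.toNorm
  let := A.toInnerProductSpace hA.posSemidef
  have hinner (u v : ι → ℝ) : ⟪u, v⟫_ℝ = u ⬝ᵥ A *ᵥ v := dotProduct_comm _ _
  have hnorm (v : ι → ℝ) : ‖v‖ ^ 2 = v ⬝ᵥ A *ᵥ v :=
    (real_inner_self_eq_norm_sq v).symm.trans (hinner v v)
  let x (i : ι) : ι → ℝ := Pi.single i 1
  have hsum (a : ι → ℝ) : ∑ i, a i • x i = a := (pi_eq_sum_univ' a).symm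
  have hsupport (a : ι → ℝ) : ∑ i with a i ≠ 0, a i • x i = a := by
    rw [sum_filter_of_ne fun i _ h ↦ left_ne_zero_of_smul h, hsum]
  have hdot (a : ι → ℝ) : ∑ i, a i ^ 2 = star a ⬝ᵥ a := by simp [dotProduct, sq]
  obtain ⟨D, hcard, hunit, hD⟩ := exists_dictionary_of_riesz_bounds (x := x) hl₀
    (fun a ↦ by rw [hsum, hnorm, hdot]; exact mul_dotProduct_le_of_le_eigenvalues hA.1 hl a)
    (fun a ↦ by rw [hsum, hnorm, hdot]; exact dotProduct_le_mul_of_eigenvalues_le hA.1 hM a) ht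
  refine ⟨D, hcard, fun d hd ↦ by rw [← hnorm, hunit d hd, one_pow], fun v hv hvt ↦ ?_⟩
  simpa only [hsupport, hnorm, hinner] using hD {i | v i ≠ 0} v hvt (by rwa [hsupport])

end Matrix

section Dictionary

variable {n : ℕ} {A : Matrix (Fin n) (Fin n) ℝ} {t : ℕ} {α : ℝ}

theorem coveringNumber_le_card {D : Finset (Fin n → ℝ)}
    (hD : ∀ v, SparseVec t v → 0 < normSigma A v →
      ∃ d ∈ D, 0 < normSigma A d ∧ α * (normSigma A v * normSigma A d) ≤ |innerSigma A v d|) :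
    coveringNumber t α A ≤ #D := by
  refine sInf_le ⟨#D, fun i ↦ D.equivFin.symm i, fun v hv hv₀ ↦ ?_, rfl⟩
  obtain ⟨d, hd, h⟩ := hD v hv hv₀
  exact ⟨D.equivFin ⟨d, hd⟩, by simpa using h⟩

theorem sparseVec_iff_card_filter_le {v : Fin n → ℝ} :
    SparseVec t v ↔ #{i | v i ≠ 0} ≤ t := by
  rw [SparseVec, Set.ncard_eq_toFinset_card', Set.toFinset_ofPred]

theorem normSigma_sq (hA : A.PosSemidef) (v : Fin n → ℝ) :
    normSigma A v ^ 2 = innerSigma A v v :=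
  Real.sq_sqrt (hA.dotProduct_mulVec_nonneg v)

theorem coveringNumber_le_of_eigenvalues_mem_Icc [NeZero n] (hA : A.PosDef) {l M : ℝ} (hl₀ : 0 < l)
    (hlM : ∀ i, hA.1.eigenvalues i ∈ Set.Icc l M) (ht : 1 ≤ t) (hα : 3 * t ^ 3 * α ^ 2 ≤ 2) :
    coveringNumber t α A ≤ ENNReal.ofReal (t ^ (3 * t + 1) * (M / l) ^ (2 * t) * n) := by
  obtain ⟨D, hcard, hunit, hD⟩ := exists_dictionary_of_eigenvalue_bounds hA hl₀
    (fun i ↦ (hlM i).1) (fun i ↦ (hlM i).2) ht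
  rw [Fintype.card_fin] at hcard
  have hnorm (d) (hd : d ∈ D) : normSigma A d = 1 := by
    rw [normSigma, innerSigma, hunit d hd, Real.sqrt_one]
  refine (coveringNumber_le_card (D := D) fun v hv hv₀ ↦ ?_).trans ?_
  · have hv_ne : v ≠ 0 := by
      rintro rfl
      simp [normSigma, innerSigma] at hv₀
    obtain ⟨d, hd, hvd⟩ := hD v hv_ne (sparseVec_iff_card_filter_le.1 hv)
    rw [← innerSigma, ← innerSigma, ← normSigma_sq hA.posSemidef] at hvd
    refine ⟨d, hd, by simp [hnorm d hd], (le_abs_self _).trans (sq_le_sq.1 ?_)⟩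
    rw [hnorm d hd, mul_one]
    refine le_of_mul_le_mul_left ?_ two_pos
    calc 2 * (α * normSigma A v) ^ 2 = α ^ 2 * (2 * normSigma A v ^ 2) := by ring
      _ ≤ α ^ 2 * (3 * t ^ 3 * innerSigma A v d ^ 2) := by gcongr
      _ = 3 * t ^ 3 * α ^ 2 * innerSigma A v d ^ 2 := by ring
      _ ≤ 2 * innerSigma A v d ^ 2 := by gcongr
  · rw [← ENNReal.ofReal_natCast]
    exact ENNReal.ofReal_le_ofReal hcard

end Dictionary

theorem three_mul_pow_three_mul_one_div_sq_le (t : ℕ) :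
    3 * (t : ℝ) ^ 3 * (1 / 3 ^ (t + 1)) ^ 2 ≤ 2 := by
  have ht : (t : ℝ) ≤ 2 ^ t := by exact_mod_cast Nat.lt_two_pow_self.le
  rw [div_pow, one_pow, mul_one_div, div_le_iff₀ (by positivity)]
  calc 3 * (t : ℝ) ^ 3 ≤ 3 * (2 ^ t) ^ 3 := by gcongr
    _ = 3 * 8 ^ t := by rw [pow_right_comm]; norm_num
    _ ≤ 18 * 9 ^ t := by gcongr <;> norm_num
    _ = 2 * (3 ^ (t + 1)) ^ 2 := by rw [pow_right_comm, pow_succ]; ring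

theorem pow_three_mul_add_one_le_two_rpow {t : ℕ} (ht : 1 ≤ t) :
    (t : ℝ) ^ (3 * t + 1) ≤ 2 ^ (4 * (t : ℝ) ^ 2) := by
  have ht' : (t : ℝ) ≤ 2 ^ t := by exact_mod_cast Nat.lt_two_pow_self.le
  calc (t : ℝ) ^ (3 * t + 1) ≤ t ^ (4 * t) :=
        pow_le_pow_right₀ (by exact_mod_cast ht) (by lia)
    _ ≤ (2 ^ t) ^ (4 * t) := by gcongr
    _ = 2 ^ (4 * t ^ 2) := by rw [← pow_mul]; ring_nf
    _ = 2 ^ (4 * (t : ℝ) ^ 2) := by rw [← Real.rpow_natCast]; push_cast; rfl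

/-- fixed-parameter covering bound: 𝒩_{t,1/3^{t+1}}(Σ) ≤ 2^{Ct²}κ^{2t+1}n
where κ is the condition number of Σ. -/
theorem stmt9 : ∃ C : ℝ, 0 < C ∧ ∀ (n t : ℕ), 1 ≤ t →
    ∀ (A : Matrix (Fin n) (Fin n) ℝ) (hA : A.PosDef) (κ : ℝ),
      κ = (⨆ i, hA.1.eigenvalues i) / (⨅ i, hA.1.eigenvalues i) →
      coveringNumber t (1 / 3 ^ (t + 1)) A ≤
        ENNReal.ofReal ((2 : ℝ) ^ (C * (t : ℝ) ^ 2) * κ ^ (2 * t + 1) * n) := by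
  refine ⟨4, four_pos, fun n t ht A hA κ hκ ↦ ?_⟩
  rcases eq_zero_or_neZero n with rfl | hn
  · have hempty := coveringNumber_le_card (D := ∅) (t := t) (α := 1 / 3 ^ (t + 1)) (A := A)
      fun v _ hv ↦ by simp [normSigma, innerSigma] at hv
    exact hempty.trans (by simp)
  set l := ⨅ i, hA.1.eigenvalues i
  set M := ⨆ i, hA.1.eigenvalues i
  have hmem (i) : hA.1.eigenvalues i ∈ Set.Icc l M :=
    ⟨ciInf_le (Set.finite_range _).bddBelow i, le_ciSup (Set.finite_range _).bddAbove i⟩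
  have hl₀ : 0 < l := by
    obtain ⟨i, hi⟩ := exists_eq_ciInf_of_finite (f := hA.1.eigenvalues)
    exact (hA.eigenvalues_pos i).trans_eq hi
  have hκ₁ : 1 ≤ κ := hκ ▸ (one_le_div hl₀).2 ((hmem 0).1.trans (hmem 0).2)
  refine (coveringNumber_le_of_eigenvalues_mem_Icc hA hl₀ hmem ht
    (three_mul_pow_three_mul_one_div_sq_le t)).trans (ENNReal.ofReal_le_ofReal ?_)
  rw [← hκ]
  gcongr
  · exact pow_three_mul_add_one_le_two_rpow ht
  · exact Nat.le_succ _
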